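/- Let a > 0 and b ≥ 0 be real numbers. The supremum over y ∈ (0, 1) of a * Real.log y + b * Real.log (1 - y) equals a * Real.log (a / (a + b)) + b * Real.log (b / (a + b)), where the convention 0 * Real.log 0 = 0 is used for the term b * Real.log (b / (a + b)) when b = 0 (in which case the supremum is 0, approached as y → 1). -/

import Mathlib

/-!
The tangent line of `log` at `a / (a + b)` bounds `log y`, and the one at `b / (a + b)` bounds
`log (1 - y)`; weighted by `a` and `b`, the linear error terms cancel, which gives the upper bound.
It is the value at `a / (a + b)`, where the objective is continuous even if this point is an
endpoint of `(0, 1)`: the logarithm that is singular there then has weight zero. Hence the bound is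
a limit of values on `(0, 1)`, with no need to treat `b = 0` apart.
-/

open Set

theorem one_sub_div_add {K : Type*} [DivisionRing K] {a b : K} (hab : a + b ≠ 0) :
    1 - a / (a + b) = b / (a + b) := by
  rw [one_sub_div hab, add_sub_cancel_left]

theorem mul_log_le_mul_log_div_add {c s y : ℝ} (hc : 0 ≤ c) (hs : 0 < s) (hy : 0 < y) :
    c * Real.log y ≤ c * Real.log (c / s) + (y * s - c) := by
  rcases hc.eq_or_lt with rfl | hc
  · simpa using (mul_pos hy hs).le
  · have tangent_line : Real.log y - Real.log (c / s) ≤ y / (c / s) - 1 := by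
      rw [← Real.log_div hy.ne' (div_pos hc hs).ne']
      exact Real.log_le_sub_one_of_pos (by positivity)
    calc c * Real.log y
        = c * Real.log (c / s) + c * (Real.log y - Real.log (c / s)) := by ring
      _ ≤ c * Real.log (c / s) + c * (y / (c / s) - 1) := by gcongr
      _ = c * Real.log (c / s) + (y * s - c) := by field_simp

theorem continuousAt_const_mul_log {c x : ℝ} (h : x = 0 → c = 0) :
    ContinuousAt (fun y => c * Real.log y) x := by
  by_cases hx : x = 0
  · simpa only [h hx, zero_mul] using continuousAt_const
  · exact continuousAt_const.mul (Real.continuousAt_log hx)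

section WeightedLog

variable {a b : ℝ}

theorem mul_log_add_mul_log_one_sub_le (ha : 0 ≤ a) (hb : 0 ≤ b) (hab : 0 < a + b) {y : ℝ}
    (hy : y ∈ Ioo 0 1) :
    a * Real.log y + b * Real.log (1 - y) ≤
      a * Real.log (a / (a + b)) + b * Real.log (b / (a + b)) := by
  have hlog := mul_log_le_mul_log_div_add ha hab hy.1
  have hlog_one_sub := mul_log_le_mul_log_div_add hb hab (sub_pos.2 hy.2)
  linarith

theorem continuousAt_mul_log_add_mul_log_one_sub (hab : a + b ≠ 0) :
    ContinuousAt (fun y => a * Real.log y + b * Real.log (1 - y)) (a / (a + b)) := by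
  have eq_zero_of_div_eq_zero {c : ℝ} (h : c / (a + b) = 0) : c = 0 :=
    (div_eq_zero_iff.1 h).resolve_right hab
  have hlog : ContinuousAt (fun y => a * Real.log y) (a / (a + b)) :=
    continuousAt_const_mul_log eq_zero_of_div_eq_zero
  have hlog_one_sub : ContinuousAt (fun y => b * Real.log y) (1 - a / (a + b)) := by
    rw [one_sub_div_add hab]
    exact continuousAt_const_mul_log eq_zero_of_div_eq_zero
  exact hlog.add (hlog_one_sub.comp (f := fun y => 1 - y) (by fun_prop))

theorem isLUB_mul_log_add_mul_log_one_sub (ha : 0 ≤ a) (hb : 0 ≤ b) (hab : 0 < a + b) :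
    IsLUB ((fun y => a * Real.log y + b * Real.log (1 - y)) '' Ioo (0 : ℝ) 1)
      (a * Real.log (a / (a + b)) + b * Real.log (b / (a + b))) := by
  have hmem : a / (a + b) ∈ closure (Ioo (0 : ℝ) 1) := by
    rw [closure_Ioo zero_ne_one]
    exact ⟨div_nonneg ha hab.le, div_le_one_of_le₀ (le_add_of_nonneg_right hb) hab.le⟩
  refine isLUB_of_mem_closure ?_ ?_
  · exact forall_mem_image.2 fun _ hy => mul_log_add_mul_log_one_sub_le ha hb hab hy
  · rw [← one_sub_div_add hab.ne']
    exact (continuousAt_mul_log_add_mul_log_one_sub hab.ne').continuousWithinAt.mem_closure_image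
      hmem

end WeightedLog

theorem stmt_14 (a b : ℝ) (ha : 0 < a) (hb : 0 ≤ b) :
    sSup ((fun y => a * Real.log y + b * Real.log (1 - y)) '' Set.Ioo (0 : ℝ) 1) =
      a * Real.log (a / (a + b)) + b * Real.log (b / (a + b)) :=
  (isLUB_mul_log_add_mul_log_one_sub ha.le hb (by positivity)).csSup_eq
    ((Set.nonempty_Ioo.2 one_pos).image _)
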